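/- Let p, q be real numbers with q ≠ 0 and p/q ≤ 0. Then for all nonzero x, y ∈ X, (p/(2p − q)) · (max(‖x‖^p, ‖y‖^p)/max(‖x‖^q, ‖y‖^q)) · α_q[x,y] ≤ α_p[x,y] ≤ ((2q − p)/q) · (max(‖x‖^p, ‖y‖^p)/max(‖x‖^q, ‖y‖^q)) · α_q[x,y]. -/

import Mathlib

/-- The `p`-angular distance `α_p[x,y] = ‖‖x‖^(p-1) • x - ‖y‖^(p-1) • y‖`. -/
noncomputable def alphaD {X : Type*} [NormedAddCommGroup X] [NormedSpace ℝ X]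
    (p : ℝ) (x y : X) : ℝ :=
  ‖(‖x‖ ^ (p - 1)) • x - (‖y‖ ^ (p - 1)) • y‖

/-!
The radial map `x ↦ ‖x‖ ^ (q - 1) • x` turns `q`-angular distances into norm distances and
`p`-angular distances into `p / q`-angular ones, so the upper bound reduces to `q = 1`. There, for
`‖y‖ ≤ ‖x‖` and `r ≤ 1`, the vector `‖x‖ • (‖x‖ ^ (r - 1) • x - ‖y‖ ^ (r - 1) • y)` is
`‖x‖ ^ r • (x - y)` plus a multiple of `y` whose norm Bernoulli's inequality bounds by
`(1 - r) * max (‖x‖ ^ r) (‖y‖ ^ r) * (‖x‖ - ‖y‖)`. The lower bound is the upper bound with `p` and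
`q` exchanged.
-/

section Real

variable {a b r : ℝ}

lemma mul_rpow_le_mul_rpow_of_le_one (hb : 0 < b) (hba : b ≤ a) (hr : r ≤ 1) :
    b * a ^ r ≤ a * b ^ r := by
  have ha : 0 < a := hb.trans_le hba
  have hanti : a ^ (r - 1) ≤ b ^ (r - 1) :=
    Real.rpow_le_rpow_of_nonpos hb hba (sub_nonpos.2 hr)
  rw [Real.rpow_sub_one ha.ne', Real.rpow_sub_one hb.ne', div_le_div_iff₀ ha hb] at hanti
  linarith

lemma mul_rpow_sub_mul_rpow_le_of_nonneg (ha : 0 < a) (hb : 0 ≤ b) (hr₀ : 0 ≤ r) (hr₁ : r ≤ 1) :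
    a * b ^ r - b * a ^ r ≤ (1 - r) * a ^ r * (a - b) := by
  have bernoulli : (b / a) ^ r ≤ 1 + r * (b / a - 1) := by
    simpa only [add_sub_cancel] using
      rpow_one_add_le_one_add_mul_self (s := b / a - 1) (by linarith [div_nonneg hb ha.le]) hr₀ hr₁
  rw [Real.div_rpow hb ha.le, div_le_iff₀ (Real.rpow_pos_of_pos ha r)] at bernoulli
  calc
    a * b ^ r - b * a ^ r ≤ a * ((1 + r * (b / a - 1)) * a ^ r) - b * a ^ r := by gcongr
    _ = (1 - r) * a ^ r * (a - b) := by field_simp; ring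

lemma mul_rpow_sub_mul_rpow_le_of_nonpos (ha : 0 < a) (hb : 0 < b) (hr : r ≤ 0) :
    a * b ^ r - b * a ^ r ≤ (1 - r) * b ^ r * (a - b) := by
  have hba : 0 < b / a := div_pos hb ha
  have bernoulli : 1 + (1 - r) * (b / a - 1) ≤ (b / a) ^ (1 - r) := by
    simpa only [add_sub_cancel] using
      one_add_mul_self_le_rpow_one_add (s := b / a - 1) (by linarith) (by linarith : 1 ≤ 1 - r)
  have hpow : a * b ^ r * (b / a) ^ (1 - r) = b * a ^ r := by
    rw [Real.rpow_sub hba, Real.rpow_one, Real.div_rpow hb.le ha.le]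
    field_simp
  calc
    a * b ^ r - b * a ^ r ≤ a * b ^ r - a * b ^ r * (1 + (1 - r) * (b / a - 1)) := by
      rw [← hpow]
      gcongr
    _ = (1 - r) * b ^ r * (a - b) := by field_simp; ring

lemma mul_rpow_sub_mul_rpow_le_max (hb : 0 < b) (hba : b ≤ a) (hr : r ≤ 1) :
    a * b ^ r - b * a ^ r ≤ (1 - r) * max (a ^ r) (b ^ r) * (a - b) := by
  have ha : 0 < a := hb.trans_le hba
  have hab : 0 ≤ a - b := sub_nonneg.2 hba
  have hr' : 0 ≤ 1 - r := sub_nonneg.2 hr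
  rcases le_total 0 r with hr₀ | hr₀
  · exact (mul_rpow_sub_mul_rpow_le_of_nonneg ha hb.le hr₀ hr).trans <|
      mul_le_mul_of_nonneg_right (mul_le_mul_of_nonneg_left (le_max_left _ _) hr') hab
  · exact (mul_rpow_sub_mul_rpow_le_of_nonpos ha hb hr₀).trans <|
      mul_le_mul_of_nonneg_right (mul_le_mul_of_nonneg_left (le_max_right _ _) hr') hab

end Real

section AngularDistance

variable {X : Type*} [NormedAddCommGroup X] [NormedSpace ℝ X] {p q r : ℝ} {x y : X}

/-- The radial power map, which keeps the direction of a vector and raises its norm to the power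
`p`. The `p`-angular distance is the distance between the images of two vectors. -/
noncomputable def radialPow (p : ℝ) (x : X) : X :=
  ‖x‖ ^ (p - 1) • x

lemma alphaD_eq_norm_radialPow_sub : alphaD p x y = ‖radialPow p x - radialPow p y‖ :=
  rfl

lemma alphaD_nonneg : 0 ≤ alphaD p x y :=
  norm_nonneg _

lemma alphaD_comm : alphaD p x y = alphaD p y x :=
  norm_sub_rev _ _

lemma norm_radialPow (hx : x ≠ 0) : ‖radialPow p x‖ = ‖x‖ ^ p := by
  have hx' : ‖x‖ ≠ 0 := norm_ne_zero_iff.2 hx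
  rw [radialPow, norm_smul, Real.norm_of_nonneg (by positivity), Real.rpow_sub_one hx',
    div_mul_cancel₀ _ hx']

lemma radialPow_ne_zero (hx : x ≠ 0) : radialPow p x ≠ 0 :=
  smul_ne_zero (Real.rpow_pos_of_pos (norm_pos_iff.2 hx) _).ne' hx

lemma radialPow_radialPow : radialPow r (radialPow q x) = radialPow (q * r) x := by
  rcases eq_or_ne x 0 with rfl | hx
  · simp only [radialPow, smul_zero]
  · have hx' : 0 < ‖x‖ := norm_pos_iff.2 hx
    rw [radialPow, norm_radialPow hx, radialPow, radialPow, smul_smul, ← Real.rpow_mul hx'.le,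
      ← Real.rpow_add hx']
    ring_nf

lemma alphaD_radialPow : alphaD r (radialPow q x) (radialPow q y) = alphaD (q * r) x y := by
  simp only [alphaD_eq_norm_radialPow_sub, radialPow_radialPow]

lemma norm_smul_radialPow_sub_radialPow (hx : x ≠ 0) (hy : y ≠ 0) :
    ‖x‖ • (radialPow r x - radialPow r y) =
      ‖x‖ ^ r • (x - y) - ((‖x‖ * ‖y‖ ^ r - ‖y‖ * ‖x‖ ^ r) / ‖y‖) • y := by
  have hx' : ‖x‖ ≠ 0 := norm_ne_zero_iff.2 hx
  have hy' : ‖y‖ ≠ 0 := norm_ne_zero_iff.2 hy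
  rw [radialPow, radialPow, Real.rpow_sub_one hx', Real.rpow_sub_one hy']
  match_scalars <;> field_simp
  ring

lemma norm_mul_alphaD_le (hy : y ≠ 0) (hyx : ‖y‖ ≤ ‖x‖) (hr : r ≤ 1) :
    ‖x‖ * alphaD r x y ≤ (2 - r) * max (‖x‖ ^ r) (‖y‖ ^ r) * ‖x - y‖ := by
  have hy' : 0 < ‖y‖ := norm_pos_iff.2 hy
  have hx : x ≠ 0 := norm_pos_iff.1 (hy'.trans_le hyx)
  set M := max (‖x‖ ^ r) (‖y‖ ^ r)
  set d := ‖x‖ * ‖y‖ ^ r - ‖y‖ * ‖x‖ ^ r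
  have hM : 0 ≤ M := le_max_of_le_left (by positivity)
  have hd_nonneg : 0 ≤ d := sub_nonneg.2 (mul_rpow_le_mul_rpow_of_le_one hy' hyx hr)
  have hd_le : d ≤ (1 - r) * M * ‖x - y‖ :=
    (mul_rpow_sub_mul_rpow_le_max hy' hyx hr).trans <|
      mul_le_mul_of_nonneg_left (norm_sub_norm_le x y) (mul_nonneg (sub_nonneg.2 hr) hM)
  calc
    ‖x‖ * alphaD r x y = ‖‖x‖ ^ r • (x - y) - (d / ‖y‖) • y‖ := by
      rw [← norm_smul_radialPow_sub_radialPow hx hy, norm_smul, norm_norm,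
        alphaD_eq_norm_radialPow_sub]
    _ ≤ ‖‖x‖ ^ r • (x - y)‖ + ‖(d / ‖y‖) • y‖ := norm_sub_le _ _
    _ = ‖x‖ ^ r * ‖x - y‖ + d := by
      rw [norm_smul, norm_smul, Real.norm_of_nonneg (by positivity),
        Real.norm_of_nonneg (by positivity), div_mul_cancel₀ _ hy'.ne']
    _ ≤ M * ‖x - y‖ + (1 - r) * M * ‖x - y‖ := by
      gcongr
      exact le_max_left _ _
    _ = (2 - r) * M * ‖x - y‖ := by ring

lemma alphaD_le_mul_norm_sub (hx : x ≠ 0) (hy : y ≠ 0) (hr : r ≤ 1) :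
    alphaD r x y ≤ (2 - r) * (max (‖x‖ ^ r) (‖y‖ ^ r) / max ‖x‖ ‖y‖) * ‖x - y‖ := by
  wlog hyx : ‖y‖ ≤ ‖x‖ generalizing x y
  · rw [alphaD_comm, max_comm, max_comm ‖x‖, norm_sub_rev]
    exact this hy hx (le_of_not_ge hyx)
  rw [max_eq_left hyx, ← mul_div_assoc, div_mul_eq_mul_div, le_div_iff₀' (norm_pos_iff.2 hx)]
  exact norm_mul_alphaD_le hy hyx hr

lemma alphaD_le_mul_alphaD (hq : q ≠ 0) (hpq : p / q ≤ 1) (hx : x ≠ 0) (hy : y ≠ 0) :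
    alphaD p x y ≤
      ((2 * q - p) / q) * (max (‖x‖ ^ p) (‖y‖ ^ p) / max (‖x‖ ^ q) (‖y‖ ^ q)) * alphaD q x y := by
  have hpow (z : X) : (‖z‖ ^ q) ^ (p / q) = ‖z‖ ^ p := by
    rw [← Real.rpow_mul (norm_nonneg z), mul_div_cancel₀ p hq]
  have hcoef : 2 - p / q = (2 * q - p) / q := by field_simp
  have h := alphaD_le_mul_norm_sub (radialPow_ne_zero (p := q) hx)
    (radialPow_ne_zero (p := q) hy) hpq
  rwa [alphaD_radialPow, mul_div_cancel₀ p hq, norm_radialPow hx, norm_radialPow hy, hpow, hpow,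
    ← alphaD_eq_norm_radialPow_sub, hcoef] at h

end AngularDistance

theorem stmt_14_general {X : Type*} [NormedAddCommGroup X] [NormedSpace ℝ X]
    (p q : ℝ) (hq : q ≠ 0) (x y : X) (hx : x ≠ 0) (hy : y ≠ 0) :
    (q / p ≤ 1 →
      (p / (2 * p - q)) * (max (‖x‖ ^ p) (‖y‖ ^ p) / max (‖x‖ ^ q) (‖y‖ ^ q)) * alphaD q x y
        ≤ alphaD p x y) ∧
    (p / q ≤ 1 →
      alphaD p x y ≤
        ((2 * q - p) / q) * (max (‖x‖ ^ p) (‖y‖ ^ p) / max (‖x‖ ^ q) (‖y‖ ^ q)) *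
          alphaD q x y) := by
  refine ⟨fun hqp ↦ ?_, fun hpq ↦ alphaD_le_mul_alphaD hq hpq hx hy⟩
  rcases eq_or_ne p 0 with rfl | hp
  · simpa only [zero_div, zero_mul] using alphaD_nonneg
  have hcoef : 0 < (2 * p - q) / p := by
    rw [sub_div, mul_div_cancel_right₀ _ hp]
    linarith
  have hmax (s : ℝ) : 0 < max (‖x‖ ^ s) (‖y‖ ^ s) :=
    lt_max_of_lt_left (Real.rpow_pos_of_pos (norm_pos_iff.2 hx) s)
  rw [← inv_div (2 * p - q) p, ← inv_div (max (‖x‖ ^ q) _), ← mul_inv,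
    inv_mul_le_iff₀ (mul_pos hcoef (div_pos (hmax q) (hmax p)))]
  exact alphaD_le_mul_alphaD hp hqp hx hy

theorem stmt_14 {X : Type*} [NormedAddCommGroup X] [NormedSpace ℝ X]
    (p q : ℝ) (hq : q ≠ 0) (hpq : p / q ≤ 0) (x y : X) (hx : x ≠ 0) (hy : y ≠ 0) :
    (p / (2 * p - q)) * (max (‖x‖ ^ p) (‖y‖ ^ p) / max (‖x‖ ^ q) (‖y‖ ^ q)) * alphaD q x y
      ≤ alphaD p x y ∧
    alphaD p x y ≤
      ((2 * q - p) / q) * (max (‖x‖ ^ p) (‖y‖ ^ p) / max (‖x‖ ^ q) (‖y‖ ^ q)) * alphaD q x y := by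
  have hqp : q / p ≤ 0 := inv_div p q ▸ inv_nonpos.2 hpq
  exact (stmt_14_general p q hq x y hx hy).imp (· (hqp.trans zero_le_one))
    (· (hpq.trans zero_le_one))
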